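/- Let k ≥ 1 and let n = (n_1, …, n_k) be a vector of positive integers with n_1 ≥ n_2 ≥ … ≥ n_k. Let E = { j ∈ {1,…,k} : n_j is even } and O = { j ∈ {1,…,k} : n_j is odd }, and define m ∈ ℤ^k by m_j = n_j/2 if j ∈ E and m_j = (n_j − 1)/2 if j ∈ O. Suppose that 2·n_i ≤ (k−1)·n_j for all i ∈ O and j ∈ E, and that n_i ≤ k·n_j for all i, j ∈ E. Then there exist a real λ > 0 and μ ∈ ℝ^k with 1/(k+1) ≤ μ_j ≤ k/(k+1) for all j such that m = λn − μ (i.e., m ∈ P(n)); in particular, n is a lonely runner instance. -/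

import Mathlib

/-!
Take `λ = 1/2 + ε`. Then `λ n_j - m_j` equals `ε n_j` for even `n_j` and `1/2 + ε n_j` for odd
`n_j`. If no speed is even, `ε = 0` works. Otherwise `ε = 1/((k+1)e)`, with `e` the least even
speed, makes `ε n_j ≥ 1/(k+1)` for even `n_j`, and the two ratio hypotheses are exactly the
remaining upper bounds (`exists_shift`). The lonely runner property follows with `t = λ`, since
the integer parts `m_j` do not affect the distance to the nearest integer.
-/

/-- The distance from a real number `x` to the nearest integer. -/
noncomputable def distNearestInt (x : ℝ) : ℝ := ⨅ m : ℤ, |x - m|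

/-- A vector `n` of positive integers is a *lonely runner instance* if there is a
time `t` such that every `t·n j` has distance at least `1/(k+1)` to the nearest integer. -/
noncomputable def IsLonelyRunnerInstance (k : ℕ) (n : Fin k → ℤ) : Prop :=
  ∃ t : ℝ, ∀ j : Fin k, (1 : ℝ) / (k + 1) ≤ distNearestInt (t * n j)

/-- A real number lying between `a + δ` and `a + 1 - δ` for an integer `a` is at distance at
least `δ` from every integer. -/
lemma le_distNearestInt {x δ : ℝ} (a : ℤ) (h₁ : a + δ ≤ x) (h₂ : x ≤ a + 1 - δ) :
    δ ≤ distNearestInt x := by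
  refine le_ciInf fun b => ?_
  rcases le_or_gt b a with h | h
  · have : (b : ℝ) ≤ a := by exact_mod_cast h
    exact le_trans (by linarith) (le_abs_self _)
  · have : (a : ℝ) + 1 ≤ b := by exact_mod_cast h
    exact le_trans (by linarith) (neg_le_abs _)

/-- The perturbation `ε` of the time `1/2`. -/
lemma exists_shift (k : ℕ) (hk : 1 ≤ k) (n : Fin k → ℤ) (hn : ∀ j, 0 < n j)
    (hOE : ∀ i j : Fin k, Odd (n i) → Even (n j) → 2 * n i ≤ ((k : ℤ) - 1) * n j)
    (hEE : ∀ i j : Fin k, Even (n i) → Even (n j) → n i ≤ (k : ℤ) * n j) :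
    ∃ ε : ℝ, 0 ≤ ε ∧
      (∀ j, Even (n j) → 1 / ((k : ℝ) + 1) ≤ ε * n j ∧ ε * n j ≤ k / (k + 1)) ∧
      ∀ j, Odd (n j) → ε * n j ≤ (k - 1) / (2 * (k + 1)) := by
  have hk' : (1 : ℝ) ≤ k := by exact_mod_cast hk
  by_cases hE : ∃ j, Even (n j)
  · obtain ⟨e, he, hmin⟩ := Set.exists_min_image {j | Even (n j)} n (Set.toFinite _) hE
    have he0 : (0 : ℝ) < n e := by exact_mod_cast hn e
    have hform (j : Fin k) : 1 / ((k + 1) * (n e : ℝ)) * n j = (n j / n e) / (k + 1) := by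
      field_simp
    refine ⟨1 / ((k + 1) * n e), by positivity, fun j hj => ?_, fun j hj => ?_⟩
    · have h₁ : (n e : ℝ) ≤ n j := by exact_mod_cast hmin j hj
      have h₂ : (n j : ℝ) ≤ k * n e := by exact_mod_cast hEE j e hj he
      rw [hform]
      constructor
      · gcongr
        exact (one_le_div he0).2 h₁
      · gcongr
        exact (div_le_iff₀ he0).2 h₂
    · have h : 2 * (n j : ℝ) ≤ (k - 1) * n e := by exact_mod_cast hOE j e hj he
      have h' : (n j : ℝ) / n e ≤ (k - 1) / 2 := by
        rw [div_le_iff₀ he0]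
        linarith
      rw [hform, ← div_div]
      exact div_le_div_of_nonneg_right h' (by positivity)
  · refine ⟨0, le_rfl, fun j hj => (hE ⟨j, hj⟩).elim, fun j _ => ?_⟩
    rw [zero_mul]
    exact div_nonneg (by linarith) (by positivity)

/-- Theorem 5: suppose the speeds are nonincreasing and let `m_j = n_j/2` for even
`n_j` and `m_j = (n_j - 1)/2` for odd `n_j`. If `2·n_i ≤ (k-1)·n_j` whenever `n_i` is
odd and `n_j` is even, and `n_i ≤ k·n_j` whenever `n_i` and `n_j` are both even, then
`m ∈ P(n)` (with a positive coefficient `λ`); in particular `n` is a lonely runner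
instance. -/
theorem lonely_runner_parity (k : ℕ) (hk : 1 ≤ k)
    (n : Fin k → ℤ) (hn : ∀ j, 0 < n j)
    (hmono : ∀ i j : Fin k, i ≤ j → n j ≤ n i)
    (m : Fin k → ℤ)
    (hm : ∀ j, m j = if Even (n j) then n j / 2 else (n j - 1) / 2)
    (hOE : ∀ i j : Fin k, Odd (n i) → Even (n j) → 2 * n i ≤ ((k : ℤ) - 1) * n j)
    (hEE : ∀ i j : Fin k, Even (n i) → Even (n j) → n i ≤ (k : ℤ) * n j) :
    (∃ lam : ℝ, 0 < lam ∧ ∃ mu : Fin k → ℝ,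
      (∀ j, (1 : ℝ) / (k + 1) ≤ mu j ∧ mu j ≤ (k : ℝ) / (k + 1)) ∧
      ∀ j, (m j : ℝ) = lam * n j - mu j) ∧
    IsLonelyRunnerInstance k n := by
  have hk' : (1 : ℝ) ≤ k := by exact_mod_cast hk
  obtain ⟨ε, hε, hev, hodd⟩ := exists_shift k hk n hn hOE hEE
  have hmu : ∀ j, (1 : ℝ) / (k + 1) ≤ (1 / 2 + ε) * n j - m j ∧
      (1 / 2 + ε) * n j - m j ≤ (k : ℝ) / (k + 1) := by
    intro j
    rcases Int.even_or_odd (n j) with h | h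
    · have hmj : 2 * m j = n j := by
        rw [hm j, if_pos h]
        exact Int.two_mul_ediv_two_of_even h
      have hmR : 2 * (m j : ℝ) = n j := by exact_mod_cast hmj
      obtain ⟨h₁, h₂⟩ := hev j h
      constructor <;> linarith
    · have hmj : 2 * m j + 1 = n j := by
        rw [hm j, if_neg (Int.not_even_iff_odd.2 h)]
        obtain ⟨c, hc⟩ := h
        omega
      have hmR : 2 * (m j : ℝ) + 1 = n j := by exact_mod_cast hmj
      have hpos : 0 ≤ ε * n j := mul_nonneg hε (by exact_mod_cast (hn j).le)
      have h₁ : (1 : ℝ) / (k + 1) ≤ 1 / 2 := by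
        gcongr
        linarith
      have h₂ : (k : ℝ) / (k + 1) = 1 / 2 + (k - 1) / (2 * (k + 1)) := by
        field_simp
        ring
      have h₃ := hodd j h
      constructor <;> linarith
  refine ⟨⟨1 / 2 + ε, by positivity, fun j => (1 / 2 + ε) * n j - m j, hmu, fun j => by ring⟩,
    1 / 2 + ε, fun j => ?_⟩
  obtain ⟨h₁, h₂⟩ := hmu j
  have hsum : (k : ℝ) / (k + 1) = 1 - 1 / (k + 1) := by
    field_simp
    ring
  exact le_distNearestInt (m j) (by linarith) (by linarith)
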